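/- Let k be an algebraically closed field of characteristic 0 and let A be a finitely generated commutative k-algebra which is an integral domain. Let J be a non-zero Lie ideal of Der_k(A) and let P be a maximal ideal of A which is a nonsingular point, i.e., the localization A_P of A at P is formally smooth over k. Then there exist μ ∈ J and f ∈ A such that μ(f) ∉ P (the function μ(f) does not vanish at P). -/

import Mathlib

set_option synthInstance.maxHeartbeats 400000

theorem aux_split {A : Type*} [CommRing A] (S : Submonoid A) {M M' : Type*}
    [AddCommGroup M] [Module A M] [Module.FinitePresentation A M]
    [AddCommGroup M'] [Module A M'] [Module (Localization S) M']
    [IsScalarTower A (Localization S) M'] [Module.Projective (Localization S) M']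
    (f : M →ₗ[A] M') [IsLocalizedModule S f] :
    ∃ (n : ℕ) (π : (Fin n → A) →ₗ[A] M) (σ : M →ₗ[A] (Fin n → A)) (s : S),
      ∀ m, π (σ m) = (s : A) • m := by
  obtain ⟨n, π, hπ⟩ := Module.Finite.exists_fin' A M
  let g := LocalizedModule.mkLinearMap S (Fin n → A)
  let πS := IsLocalizedModule.mapExtendScalars S g f (Localization S) π
  have hπS : Function.Surjective πS := IsLocalizedModule.map_surjective S g f π hπ
  obtain ⟨t, ht⟩ := Module.projective_lifting_property πS LinearMap.id hπS
  obtain ⟨σ, s, hσ⟩ := Module.FinitePresentation.exists_lift_of_isLocalizedModule S g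
    ((t.restrictScalars A) ∘ₗ f)
  have h : f.comp (π ∘ₗ σ) = f.comp ((s : A) • LinearMap.id) := by
    ext m
    have h1 : g (σ m) = (s : A) • t (f m) := LinearMap.congr_fun hσ m
    have h2 : πS (g (σ m)) = f (π (σ m)) := IsLocalizedModule.map_apply S g f π (σ m)
    have h3 : πS (t (f m)) = f m := LinearMap.congr_fun ht (f m)
    have h4 : πS ((s : A) • t (f m)) = (s : A) • πS (t (f m)) :=
      (πS.restrictScalars A).map_smul _ _
    change f (π (σ m)) = f ((s : A) • m)
    rw [← h2, h1, h4, h3, map_smul]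
  obtain ⟨s', hs'⟩ := Module.Finite.exists_smul_of_comp_eq_of_isLocalizedModule S f _ _ h
  refine ⟨n, π, (s' : A) • σ, s' * s, fun m => ?_⟩
  have h5 : (s' : A) • π (σ m) = (s' : A) • ((s : A) • m) := LinearMap.congr_fun hs' m
  simp [h5, mul_smul]

theorem aux_cotangent (k : Type*) [Field k] [IsAlgClosed k]
    (A : Type*) [CommRing A] [Algebra k A] [Algebra.FiniteType k A]
    (P : Ideal A) [P.IsMaximal] :
    ∃ θ : Derivation k A P.Cotangent, ∀ y : P, θ y = P.toCotangent y := by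
  let _ := Ideal.Quotient.field P
  have : Module.Finite k (A ⧸ P) := finite_of_finite_type_of_isJacobsonRing k (A ⧸ P)
  have hb : Function.Bijective (algebraMap k (A ⧸ P)) :=
    IsAlgClosed.algebraMap_bijective_of_isIntegral
  let e := AlgEquiv.ofBijective (Algebra.ofId k (A ⧸ P)) hb
  let c : A →ₐ[k] k := e.symm.toAlgHom.comp (Ideal.Quotient.mkₐ k P)
  have hc : ∀ a : A, a - algebraMap k A (c a) ∈ P := by
    intro a
    rw [← Ideal.Quotient.eq]
    have : e (c a) = Ideal.Quotient.mk P a := e.apply_symm_apply _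
    rw [← this]
    rfl
  have hc0 : ∀ a ∈ P, c a = 0 := by
    intro a ha
    have : Ideal.Quotient.mkₐ k P a = 0 := Ideal.Quotient.eq_zero_iff_mem.mpr ha
    change e.symm (Ideal.Quotient.mkₐ k P a) = 0
    rw [this, map_zero]
  let L : A →ₗ[k] P.Cotangent :=
    { toFun := fun a => P.toCotangent ⟨a - algebraMap k A (c a), hc a⟩
      map_add' := fun a b => by
        rw [← map_add]; congr 1; ext; simp; ring
      map_smul' := fun r a => by
        rw [RingHom.id_apply,
          ← algebraMap_smul A r (P.toCotangent ⟨a - algebraMap k A (c a), hc a⟩),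
          ← map_smul P.toCotangent]
        congr 1; ext
        simp [Algebra.smul_def]; ring }
  refine ⟨Derivation.mk' L fun a b => ?_, fun y => ?_⟩
  · change P.toCotangent _ = a • P.toCotangent _ + b • P.toCotangent _
    rw [← map_smul, ← map_smul, ← map_add, ← sub_eq_zero, ← map_sub, Ideal.toCotangent_eq_zero]
    have h := Submodule.neg_mem _ (Ideal.mul_mem_mul (hc a) (hc b))
    rw [← pow_two] at h
    convert h using 1
    simp
    ring
  · change P.toCotangent _ = _
    congr 1; ext; simp [hc0 y y.2]

theorem aux_euler (k : Type*) [Field k] [IsAlgClosed k]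
    (A : Type*) [CommRing A] [Algebra k A] [Algebra.FiniteType k A]
    (P : Ideal A) [P.IsMaximal]
    (hsmooth : Algebra.FormallySmooth k (Localization.AtPrime P)) :
    ∃ (n : ℕ) (x : Fin n → A) (D : Fin n → Derivation k A A) (h : A), h ∉ P ∧ (∀ i, x i ∈ P) ∧
      ∀ y ∈ P, ∑ i, x i * D i y - h * y ∈ P ^ 2 := by
  obtain ⟨θ, hθ⟩ := aux_cotangent k A P
  have : Algebra.FinitePresentation k A := Algebra.FinitePresentation.of_finiteType.mp inferInstance
  have hp : Module.Projective (Localization P.primeCompl)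
    (Ω[Localization P.primeCompl⁄k]) := hsmooth.projective_kaehlerDifferential
  have hl : IsLocalizedModule P.primeCompl
      (KaehlerDifferential.map k k A (Localization P.primeCompl)) := inferInstance
  obtain ⟨n, π, σ, s, hs⟩ := aux_split P.primeCompl
    (KaehlerDifferential.map k k A (Localization P.primeCompl))
  choose x hx using fun i => P.toCotangent_surjective
    (θ.liftKaehlerDifferential (π (Pi.single i 1)))
  refine ⟨n, fun i => x i, fun i => ((LinearMap.proj i) ∘ₗ σ).compDer (KaehlerDifferential.D k A),
    s, s.2, fun i => (x i).2, fun y hy => ?_⟩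
  have h1 := congrArg θ.liftKaehlerDifferential (hs (KaehlerDifferential.D k A y))
  rw [map_smul, Derivation.liftKaehlerDifferential_comp_D, hθ ⟨y, hy⟩,
    LinearMap.pi_apply_eq_sum_univ π, map_sum] at h1
  have h2 : ∑ i, θ.liftKaehlerDifferential (σ (KaehlerDifferential.D k A y) i •
      π (fun j => if i = j then 1 else 0)) =
      P.toCotangent (∑ i, σ (KaehlerDifferential.D k A y) i • x i) := by
    rw [map_sum]
    refine Finset.sum_congr rfl fun i _ => ?_
    rw [map_smul, map_smul, hx]
    congr 3
    ext j
    simp [Pi.single_apply, eq_comm]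
  rw [h2, ← map_smul, Ideal.toCotangent_eq] at h1
  convert h1 using 2
  simp [mul_comm]
  rfl

theorem aux_pow {k : Type*} [Field k]
    {A : Type*} [CommRing A] [Algebra k A] (P : Ideal A)
    (E : Derivation k A A) (h : A) (hE : ∀ y ∈ P, E y - h * y ∈ P ^ 2) (m : ℕ) :
    ∀ y ∈ P ^ (m + 1), E y - (m + 1 : ℕ) * (h * y) ∈ P ^ (m + 2) := by
  induction m with
  | zero => intro y hy; simpa using hE y (by simpa using hy)
  | succ m ih =>
    intro y hy
    rw [pow_succ] at hy
    induction hy using Submodule.mul_induction_on' with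
    | mem_mul_mem a ha b hb =>
      have h1 := Ideal.mul_mem_mul (ih a ha) hb
      have h2 := Ideal.mul_mem_mul ha (hE b hb)
      rw [← pow_succ] at h1
      rw [← pow_add] at h2
      have h3 := Submodule.add_mem _ h1 h2
      convert h3 using 1
      simp
      ring
    | add a _ b _ ha hb =>
      convert Submodule.add_mem _ ha hb using 1
      simp
      ring

/-- Local property of ideals: every non-zero Lie ideal of `Der_k(A)` contains a derivation
that does not vanish at a given nonsingular point `P`. -/
theorem exists_derivation_nonvanishing_at_nonsingular_point.{u}
    (k : Type u) [Field k] [IsAlgClosed k] [CharZero k]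
    (A : Type u) [CommRing A] [IsDomain A] [Algebra k A] [Algebra.FiniteType k A]
    (J : LieIdeal k (Derivation k A A)) (hJ : J ≠ ⊥)
    (P : Ideal A) [P.IsMaximal]
    (hsmooth : Algebra.FormallySmooth k (Localization.AtPrime P)) :
    ∃ μ ∈ J, ∃ f : A, μ f ∉ P := by
  classical
  obtain ⟨n, x, D, h, hh, hx, hD⟩ := aux_euler k A P hsmooth
  have hnoeth : IsNoetherianRing A := Algebra.FiniteType.isNoetherianRing k A
  have hex : ∃ m : ℕ, ∃ μ ∈ J, ∃ f : A, μ f ∉ P ^ m := by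
    by_contra! hcon
    apply hJ
    rw [LieSubmodule.eq_bot_iff]
    intro μ hμ
    ext f
    have hk := Ideal.iInf_pow_eq_bot_of_isDomain P (Ideal.IsPrime.ne_top inferInstance)
    have : μ f ∈ ⨅ i, P ^ i := by
      rw [Submodule.mem_iInf]
      exact fun i => hcon i μ hμ f
    rw [hk] at this
    simpa using this
  obtain ⟨μ, hμ, f, hf⟩ := Nat.find_spec hex
  have hmin := fun m (hm : m < Nat.find hex) => Nat.find_min hex hm
  generalize Nat.find hex = m at hf hmin
  match m, hf, hmin with
  | 0, hf, _ => simp at hf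
  | 1, hf, _ => exact ⟨μ, hμ, f, by simpa using hf⟩
  | m + 2, hf, hmin =>
    exfalso
    have hm : ∀ ν ∈ J, ∀ a : A, ν a ∈ P ^ (m + 1) := by
      have := hmin (m + 1) (by omega)
      push Not at this
      exact this
    have hDi : ∀ i, D i (μ f) ∈ P ^ (m + 1) := by
      intro i
      have h1 : ⁅D i, μ⁆ ∈ J := lie_mem_right k (Derivation k A A) J (D i) μ hμ
      have h2 := hm _ h1 f
      rw [Derivation.commutator_apply] at h2
      have h3 := Submodule.add_mem _ h2 (hm μ hμ (D i f))
      simpa using h3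
    let E : Derivation k A A := ∑ i, x i • D i
    have hEa : ∀ y, E y = ∑ i, x i * D i y := by
      intro y
      have := congrFun (map_sum (Derivation.coeFnAddMonoidHom (R := k) (A := A) (M := A))
        (fun i => x i • D i) Finset.univ) y
      rw [Finset.sum_apply] at this
      exact this
    have h4 := aux_pow P E h (fun y hy => by rw [hEa]; exact hD y hy) m (μ f) (hm μ hμ f)
    have h5 : E (μ f) ∈ P ^ (m + 2) := by
      rw [hEa]
      refine Submodule.sum_mem _ fun i _ => ?_
      rw [pow_succ']
      exact Ideal.mul_mem_mul (hx i) (hDi i)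
    have h6 : ((m + 1 : ℕ) : A) * (h * μ f) ∈ P ^ (m + 2) := by
      have := Submodule.sub_mem _ h5 h4
      simpa using this
    have h7 : h * μ f ∈ P ^ (m + 2) := by
      have hu : algebraMap k A ((m + 1 : ℕ) : k)⁻¹ * ((m + 1 : ℕ) : A) = 1 := by
        rw [← map_natCast (algebraMap k A), ← map_mul, inv_mul_cancel₀ (by exact_mod_cast Nat.succ_ne_zero m), map_one]
      have := Ideal.mul_mem_left _ (algebraMap k A ((m + 1 : ℕ) : k)⁻¹) h6
      rwa [← mul_assoc, hu, one_mul] at this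
    have hcop : Ideal.span {h} ⊔ P ^ (m + 2) = ⊤ := by
      apply Ideal.sup_pow_eq_top
      have := (inferInstance : P.IsMaximal)
      rw [sup_comm]
      exact this.out.2 _ (by
        rw [left_lt_sup, Ideal.span_singleton_le_iff_mem]; exact hh)
    have h1 : (1 : A) ∈ Ideal.span {h} ⊔ P ^ (m + 2) := by rw [hcop]; trivial
    obtain ⟨a, ha, b, hb, hab⟩ := Submodule.mem_sup.mp h1
    obtain ⟨c, rfl⟩ := Ideal.mem_span_singleton'.mp ha
    apply hf
    have : μ f = c * (h * μ f) + μ f * b := by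
      linear_combination -(μ f) * hab
    rw [this]
    exact Submodule.add_mem _ (Ideal.mul_mem_left _ _ h7) (Ideal.mul_mem_left _ _ hb)
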